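/- arXiv:2506.08091 — 3 statements merged into one kernel-verified Lean document; each statement's English description precedes it below -/
import Mathlib

section
/- Let G be a group, U : G →* M_m(ℂ) and V : G →* M_n(ℂ) unitary representations (group homomorphisms into unitary matrices), and let ρ be a complex matrix indexed by (Fin m × Fin n) that is invariant under the collective group action: for every h ∈ G, (U h ⊗ₖ V h) * ρ * (U h ⊗ₖ V h)ᴴ = ρ. Then for all g, h ∈ G, (U h ⊗ₖ V (g*h)) * ρ * (U h ⊗ₖ V (g*h))ᴴ = (1ₘ ⊗ₖ V g) * ρ * (1ₘ ⊗ₖ V g)ᴴ. -/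
open Matrix Kronecker

/-- On a state invariant under the collective group action, the relational group action
`1 ⊗ₖ V g` can equivalently be implemented by any transformation `U h ⊗ₖ V (g*h)`. -/
theorem relational_action_on_invariant_state {G : Type*} [Group G] {m n : ℕ}
    (U : G →* Matrix (Fin m) (Fin m) ℂ) (V : G →* Matrix (Fin n) (Fin n) ℂ)
    (hU : ∀ g : G, (U g)ᴴ * U g = 1 ∧ U g * (U g)ᴴ = 1)
    (hV : ∀ g : G, (V g)ᴴ * V g = 1 ∧ V g * (V g)ᴴ = 1)
    (ρ : Matrix (Fin m × Fin n) (Fin m × Fin n) ℂ)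
    (hρ : ∀ h : G, (U h ⊗ₖ V h) * ρ * (U h ⊗ₖ V h)ᴴ = ρ)
    (g h : G) :
    (U h ⊗ₖ V (g * h)) * ρ * (U h ⊗ₖ V (g * h))ᴴ =
      ((1 : Matrix (Fin m) (Fin m) ℂ) ⊗ₖ V g) * ρ *
        ((1 : Matrix (Fin m) (Fin m) ℂ) ⊗ₖ V g)ᴴ := by
  have key : U h ⊗ₖ V (g * h) = ((1 : Matrix (Fin m) (Fin m) ℂ) ⊗ₖ V g) * (U h ⊗ₖ V h) := by
    rw [← mul_kronecker_mul, one_mul, map_mul]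
  -- The collective factor `U h ⊗ₖ V h` acts first, and fixes `ρ` by invariance.
  conv_rhs => rw [← hρ h]
  rw [key, conjTranspose_mul]
  simp only [Matrix.mul_assoc]
end

section
/- Let y₊ := (1/2)·!![1, −i; i, 1] and y₋ := (1/2)·!![1, i; −i, 1] be the 2×2 complex matrices projecting onto the ±1 eigenvectors of the Pauli Y operator, and for an n×n complex matrix X write X̄ for its entrywise complex conjugate. Define S(ρ) := (1/2)·(y₊ ⊗ₖ ρ + y₋ ⊗ₖ ρ̄) and Ŝ(E) := y₊ ⊗ₖ E + y₋ ⊗ₖ Ē. Then for every n×n complex matrix ρ, the entrywise complex conjugate of S(ρ) equals S(ρ), and for every n×n complex matrix E, the entrywise complex conjugate of Ŝ(E) equals Ŝ(E); that is, the images of the Stueckelberg map lie in real-amplitude quantum theory. -/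
/-! Entrywise conjugation is a ring homomorphism, so it is additive and multiplicative on Kronecker
products. It swaps `yPlus` with `yMinus`, and being an involution it also swaps `ρ` with its
conjugate. Hence it exchanges the two summands of the Stueckelberg map; the prefactor `1 / 2`
of the state version is real. -/

open Matrix Kronecker

/-- Projector onto the `+1` eigenvector of the Pauli `Y` operator. -/
noncomputable def yPlus : Matrix (Fin 2) (Fin 2) ℂ :=
  (1 / 2 : ℂ) • !![1, -Complex.I; Complex.I, 1]

/-- Projector onto the `-1` eigenvector of the Pauli `Y` operator. -/
noncomputable def yMinus : Matrix (Fin 2) (Fin 2) ℂ :=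
  (1 / 2 : ℂ) • !![1, Complex.I; -Complex.I, 1]

/-- The Stueckelberg map `$_C` applied to the injection of a state. -/
noncomputable def stueckState {n : ℕ} (ρ : Matrix (Fin n) (Fin n) ℂ) :
    Matrix (Fin 2 × Fin n) (Fin 2 × Fin n) ℂ :=
  (1 / 2 : ℂ) • (yPlus ⊗ₖ ρ + yMinus ⊗ₖ ρ.map (starRingEnd ℂ))

/-- The Stueckelberg map `$_C` applied to the contraction with an effect. -/
noncomputable def stueckEffect {n : ℕ} (E : Matrix (Fin n) (Fin n) ℂ) :
    Matrix (Fin 2 × Fin n) (Fin 2 × Fin n) ℂ :=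
  yPlus ⊗ₖ E + yMinus ⊗ₖ E.map (starRingEnd ℂ)

theorem yPlus_map_conj : yPlus.map (starRingEnd ℂ) = yMinus := by
  ext i j
  fin_cases i <;> fin_cases j <;> simp [yPlus, yMinus, map_ofNat (starRingEnd ℂ) 2]

theorem yMinus_map_conj : yMinus.map (starRingEnd ℂ) = yPlus := by
  ext i j
  fin_cases i <;> fin_cases j <;> simp [yPlus, yMinus, map_ofNat (starRingEnd ℂ) 2]

theorem stueckEffect_map_conj {n : ℕ} (E : Matrix (Fin n) (Fin n) ℂ) :
    (stueckEffect E).map (starRingEnd ℂ) = stueckEffect E := by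
  ext ⟨i, k⟩ ⟨j, l⟩
  have hp : starRingEnd ℂ (yPlus i j) = yMinus i j := congr_fun₂ yPlus_map_conj i j
  have hm : starRingEnd ℂ (yMinus i j) = yPlus i j := congr_fun₂ yMinus_map_conj i j
  simp only [stueckEffect, Matrix.map_apply, Matrix.add_apply, kronecker_apply, map_add, map_mul, hp, hm,
    Complex.conj_conj]
  exact add_comm _ _

theorem stueckState_eq {n : ℕ} (ρ : Matrix (Fin n) (Fin n) ℂ) :
    stueckState ρ = (1 / 2 : ℂ) • stueckEffect ρ := rfl

/-- The images of the Stueckelberg map lie in real-amplitude quantum theory: they are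
fixed by entrywise complex conjugation. -/
theorem stueckelberg_images_real {n : ℕ} :
    (∀ ρ : Matrix (Fin n) (Fin n) ℂ,
        (stueckState ρ).map (starRingEnd ℂ) = stueckState ρ) ∧
      (∀ E : Matrix (Fin n) (Fin n) ℂ,
        (stueckEffect E).map (starRingEnd ℂ) = stueckEffect E) := by
  refine ⟨fun ρ => ?_, stueckEffect_map_conj⟩
  ext i j
  have h : starRingEnd ℂ (stueckEffect ρ i j) = stueckEffect ρ i j :=
    congr_fun₂ (stueckEffect_map_conj ρ) i j
  simp [stueckState_eq, h, map_ofNat (starRingEnd ℂ) 2]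
end

section
/- Let y₊ := (1/2)·!![1, −i; i, 1] and y₋ := (1/2)·!![1, i; −i, 1] be the 2×2 complex matrices projecting onto the ±1 eigenvectors of the Pauli Y operator, and for an n×n complex matrix X write X̄ for its entrywise complex conjugate. Define S(ρ) := (1/2)·(y₊ ⊗ₖ ρ + y₋ ⊗ₖ ρ̄) and Ŝ(E) := y₊ ⊗ₖ E + y₋ ⊗ₖ Ē. If ρ and E are Hermitian n×n complex matrices, then trace(Ŝ(E) * S(ρ)) = trace(E * ρ). -/
/-!
The matrices `y₊`, `y₋` are orthogonal idempotents of trace one, so multiplicativity of the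
Kronecker product and of its trace kill the cross terms and leave
`(1/2) * (tr (E ρ) + tr (Ē ρ̄))`. For Hermitian matrices entrywise conjugation is transposition,
and `tr (Eᵀ ρᵀ) = tr ((ρ E)ᵀ) = tr (E ρ)`, so both terms agree.
-/

open Matrix Kronecker

lemma yPlus_mul_yPlus : yPlus * yPlus = yPlus := by
  ext i j
  fin_cases i <;> fin_cases j <;> simp [yPlus, Matrix.mul_apply] <;> ring_nf <;> simp <;> ring

lemma yMinus_mul_yMinus : yMinus * yMinus = yMinus := by
  ext i j
  fin_cases i <;> fin_cases j <;> simp [yMinus, Matrix.mul_apply] <;> ring_nf <;> simp <;> ring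

lemma yPlus_mul_yMinus : yPlus * yMinus = 0 := by
  ext i j
  fin_cases i <;> fin_cases j <;> simp [yPlus, yMinus, Matrix.mul_apply] <;> ring_nf <;> simp

lemma yMinus_mul_yPlus : yMinus * yPlus = 0 := by
  ext i j
  fin_cases i <;> fin_cases j <;> simp [yPlus, yMinus, Matrix.mul_apply] <;> ring_nf <;> simp

lemma trace_yPlus : yPlus.trace = 1 := by
  norm_num [yPlus, Matrix.trace_fin_two]

lemma trace_yMinus : yMinus.trace = 1 := by
  norm_num [yMinus, Matrix.trace_fin_two]

lemma map_conj_eq_transpose {n : ℕ} {A : Matrix (Fin n) (Fin n) ℂ} (hA : A.IsHermitian) :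
    A.map (starRingEnd ℂ) = Aᵀ := by
  ext i j
  exact hA.apply j i

/-- The Stueckelberg map reproduces the statistics of any prepare-and-measure
experiment on a unipartite system: `trace(Ŝ(E) * S(ρ)) = trace(E * ρ)` for Hermitian
`ρ` and `E`. -/
theorem stueckelberg_prepare_measure {n : ℕ} (ρ E : Matrix (Fin n) (Fin n) ℂ)
    (hρ : ρ.IsHermitian) (hE : E.IsHermitian) :
    Matrix.trace (stueckEffect E * stueckState ρ) = Matrix.trace (E * ρ) := by
  rw [stueckEffect, stueckState, map_conj_eq_transpose hρ, map_conj_eq_transpose hE,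
    Matrix.mul_smul, Matrix.trace_smul]
  simp only [Matrix.add_mul, Matrix.mul_add, ← Matrix.mul_kronecker_mul, yPlus_mul_yPlus,
    yMinus_mul_yMinus, yPlus_mul_yMinus, yMinus_mul_yPlus, Matrix.zero_kronecker, add_zero,
    zero_add, Matrix.trace_add, Matrix.trace_kronecker, trace_yPlus, trace_yMinus, one_mul]
  rw [← Matrix.transpose_mul, Matrix.trace_transpose, Matrix.trace_mul_comm ρ E, smul_eq_mul]
  ring
end
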